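/- arXiv:math/0502429 — 6 statements merged into one kernel-verified Lean document; each statement's English description precedes it below -/
import Mathlib

section
/- The star product is associative: with star-product data as given, the ℤ-bilinear product ⋆ on MonoidAlgebra R T determined on single terms by (r·g) ⋆ (s·h) = (r·s·∏_{λ∈Λ} e_λ^{n_λ(g,h)})·(g·h) satisfies (x ⋆ y) ⋆ z = x ⋆ (y ⋆ z) for all x, y, z in MonoidAlgebra R T. (Theorem 2.3 of the paper, stated at the algebraic generality at which it is proved.) -/
/-- **Theorem 2.3 of Goldin–Holm–Knutson** (algebraic generality).
Star-product data: a commutative group `T`, a finite index set `Λ`, logweight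
functions `a l : T → ℝ` taking values in `[0,1)` whose defects are integers,
a commutative ring `R`, Euler classes `e : Λ → R`, and natural numbers
`n l g h` whose real value is `a l g + a l h - a l (g*h)`.  The ℤ-bilinear
product `⋆` on `MonoidAlgebra R T` determined on single terms by
`(r·g) ⋆ (s·h) = (r·s·∏ l, e l ^ n l g h)·(g·h)` is associative. -/
theorem star_product_assoc
    {T : Type*} [CommGroup T]
    {Λ : Type*} [Fintype Λ]
    (a : Λ → T → ℝ)
    (ha_mem : ∀ l (g : T), a l g ∈ Set.Ico (0 : ℝ) 1)
    (ha_int : ∀ l (g h : T), ∃ k : ℤ, a l g + a l h - a l (g * h) = k)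
    {R : Type*} [CommRing R]
    (e : Λ → R)
    (n : Λ → T → T → ℕ)
    (hn : ∀ l (g h : T), (n l g h : ℝ) = a l g + a l h - a l (g * h))
    (star : MonoidAlgebra R T →ₗ[ℤ] MonoidAlgebra R T →ₗ[ℤ] MonoidAlgebra R T)
    (hstar : ∀ (r s : R) (g h : T),
      star (MonoidAlgebra.single g r) (MonoidAlgebra.single h s)
        = MonoidAlgebra.single (g * h) (r * s * ∏ l, e l ^ n l g h)) :
    ∀ x y z : MonoidAlgebra R T, star (star x y) z = star x (star y z) := by
  have key : ∀ l (g h k : T), n l g h + n l (g * h) k = n l h k + n l g (h * k) := by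
    intro l g h k
    have : ((n l g h + n l (g * h) k : ℕ) : ℝ) = ((n l h k + n l g (h * k) : ℕ) : ℝ) := by
      push_cast
      rw [hn, hn, hn, hn, mul_assoc]
      ring
    exact_mod_cast this
  intro x y z
  induction x using MonoidAlgebra.induction_linear with
  | zero => simp
  | add x x' hx hx' => simp only [map_add, LinearMap.add_apply, hx, hx']
  | single g r =>
    induction y using MonoidAlgebra.induction_linear with
    | zero => simp
    | add y y' hy hy' => simp only [map_add, LinearMap.add_apply, hy, hy']
    | single h s =>
      induction z using MonoidAlgebra.induction_linear with
      | zero => simp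
      | add z z' hz hz' => simp only [map_add, hz, hz']
      | single k t =>
        have hp : (∏ l, e l ^ n l g h) * ∏ l, e l ^ n l (g * h) k
            = (∏ l, e l ^ n l h k) * ∏ l, e l ^ n l g (h * k) := by
          rw [← Finset.prod_mul_distrib, ← Finset.prod_mul_distrib]
          refine Finset.prod_congr rfl fun l _ => ?_
          rw [← pow_add, ← pow_add, key]
        rw [hstar, hstar, hstar, hstar, mul_assoc g h k]
        congr 1
        linear_combination (r * s * t) * hp
end

section
/- The binary star product iterates to the n-ary star product: with star-product data as given, for every n ≥ 1, all r₁,…,rₙ ∈ R and g₁,…,gₙ ∈ T, the left-associated iterated product ( … ((r₁·g₁) ⋆ (r₂·g₂)) ⋆ … ) ⋆ (rₙ·gₙ) equals ((∏ᵢ rᵢ)·∏_{λ∈Λ} e_λ^{m_λ})·(g₁g₂⋯gₙ), where m_λ is the natural number whose real value is a_λ(g₁) + … + a_λ(gₙ) − a_λ(g₁g₂⋯gₙ). (Equation (2.2) and the proof of Theorem 2.3: the n-fold product can be built from the 2-fold product.) -/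
/-- **Equation (2.2) / proof of Theorem 2.3 of Goldin–Holm–Knutson.**
With star-product data as in Definition 2.2, the binary star product iterates
to the n-ary star product: for every `n ≥ 1` (here `n = N + 1`), coefficients
`r i` and group elements `g i`, the left-associated iterated product
`(…((r₀·g₀) ⋆ (r₁·g₁)) ⋆ …) ⋆ (r_N·g_N)` equals
`((∏ i, r i)·∏ l, e l ^ m l)·(∏ i, g i)`, where `m l` is the natural number
whose real value is `∑ i, a l (g i) - a l (∏ i, g i)`. -/
theorem star_product_nary
    {T : Type*} [CommGroup T]
    {Λ : Type*} [Fintype Λ]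
    (a : Λ → T → ℝ)
    (ha_mem : ∀ l (g : T), a l g ∈ Set.Ico (0 : ℝ) 1)
    (ha_int : ∀ l (g h : T), ∃ k : ℤ, a l g + a l h - a l (g * h) = k)
    {R : Type*} [CommRing R]
    (e : Λ → R)
    (n : Λ → T → T → ℕ)
    (hn : ∀ l (g h : T), (n l g h : ℝ) = a l g + a l h - a l (g * h))
    (star : MonoidAlgebra R T →ₗ[ℤ] MonoidAlgebra R T →ₗ[ℤ] MonoidAlgebra R T)
    (hstar : ∀ (r s : R) (g h : T),
      star (MonoidAlgebra.single g r) (MonoidAlgebra.single h s)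
        = MonoidAlgebra.single (g * h) (r * s * ∏ l, e l ^ n l g h)) :
    ∀ (N : ℕ) (r : Fin (N + 1) → R) (g : Fin (N + 1) → T) (m : Λ → ℕ),
      (∀ l, (m l : ℝ) = (∑ i, a l (g i)) - a l (∏ i, g i)) →
      List.foldl (fun acc x => star acc x)
          (MonoidAlgebra.single (g 0) (r 0))
          (List.ofFn fun i : Fin N => MonoidAlgebra.single (g i.succ) (r i.succ))
        = MonoidAlgebra.single (∏ i, g i) ((∏ i, r i) * ∏ l, e l ^ m l) := by
  have key : ∀ (N : ℕ) (r : Fin (N + 1) → R) (g : Fin (N + 1) → T), ∃ m : Λ → ℕ,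
      (∀ l, (m l : ℝ) = (∑ i, a l (g i)) - a l (∏ i, g i)) ∧
      List.foldl (fun acc x => star acc x)
          (MonoidAlgebra.single (g 0) (r 0))
          (List.ofFn fun i : Fin N => MonoidAlgebra.single (g i.succ) (r i.succ))
        = MonoidAlgebra.single (∏ i, g i) ((∏ i, r i) * ∏ l, e l ^ m l) := by
    intro N
    induction N with
    | zero =>
      intro r g
      exact ⟨fun _ => 0, by simp, by simp⟩
    | succ N ih =>
      intro r g
      obtain ⟨m, hm, h⟩ := ih (fun i => r i.castSucc) (fun i => g i.castSucc)
      refine ⟨fun l => m l + n l (∏ i : Fin (N + 1), g i.castSucc) (g (Fin.last _)), ?_, ?_⟩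
      · intro l
        push_cast
        rw [hm, hn, Fin.prod_univ_castSucc g, Fin.sum_univ_castSucc (fun i => a l (g i))]
        ring
      · rw [List.ofFn_succ', List.concat_eq_append, List.foldl_append]
        simp only [Fin.castSucc_zero, ← Fin.succ_castSucc] at h ⊢
        rw [h, List.foldl_cons, List.foldl_nil, Fin.succ_last, hstar,
          Fin.prod_univ_castSucc g, Fin.prod_univ_castSucc r]
        simp only [pow_add, Finset.prod_mul_distrib]
        congr 1
        ring
  intro N r g m hm
  obtain ⟨m', hm', h⟩ := key N r g
  have : m = m' := by
    funext l
    have := (hm l).trans (hm' l).symm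
    exact_mod_cast this
  rw [this, h]
end

section
/- The star product is graded with respect to the age-shifted real degree: with graded star-product data as given, for all g,h ∈ T, all p,q ∈ ℝ, all r ∈ A p and s ∈ A q, the coefficient r·s·∏_{λ∈Λ} e_λ^{n_λ(g,h)} of (r·g) ⋆ (s·h) lies in A(p + q + 2·age(g) + 2·age(h) − 2·age(g·h)); equivalently, assigning the single term r·g (with r ∈ A p) the degree p + 2·age(g) makes the star product degree-additive: deg((r·g) ⋆ (s·h)) = deg(r·g) + deg(s·h). (Theorem 2.5.) -/
/-- **Theorem 2.5 of Goldin–Holm–Knutson.**  With graded star-product data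
(`R` graded by real numbers via `A : ℝ → AddSubgroup R` with `1 ∈ A 0` and
`A p * A q ⊆ A (p+q)`, dimensions `d : Λ → ℕ` with `e l ∈ A (2·d l)`), the
star product is graded with respect to the age-shifted real degree: for
`r ∈ A p` and `s ∈ A q`, the coefficient `r·s·∏ l, e l ^ n l g h` of
`(r·g) ⋆ (s·h)` lies in `A (p + q + 2·age g + 2·age h − 2·age (g·h))`, where
`age g = ∑ l, d l · a l g`. -/
theorem star_product_graded
    {T : Type*} [CommGroup T]
    {Λ : Type*} [Fintype Λ]
    (a : Λ → T → ℝ)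
    (ha_mem : ∀ l (g : T), a l g ∈ Set.Ico (0 : ℝ) 1)
    (ha_int : ∀ l (g h : T), ∃ k : ℤ, a l g + a l h - a l (g * h) = k)
    {R : Type*} [CommRing R]
    (e : Λ → R)
    (n : Λ → T → T → ℕ)
    (hn : ∀ l (g h : T), (n l g h : ℝ) = a l g + a l h - a l (g * h))
    (A : ℝ → AddSubgroup R)
    (hone : (1 : R) ∈ A 0)
    (hmul : ∀ (p q : ℝ) (x y : R), x ∈ A p → y ∈ A q → x * y ∈ A (p + q))
    (d : Λ → ℕ)
    (he : ∀ l, e l ∈ A (2 * (d l : ℝ))) :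
    ∀ (g h : T) (p q : ℝ) (r s : R), r ∈ A p → s ∈ A q →
      r * s * ∏ l, e l ^ n l g h ∈
        A (p + q + 2 * (∑ l, (d l : ℝ) * a l g) + 2 * (∑ l, (d l : ℝ) * a l h)
            - 2 * (∑ l, (d l : ℝ) * a l (g * h))) := by
  classical
  intro g h p q r s hr hs
  have hpow : ∀ (l : Λ) (m : ℕ), e l ^ m ∈ A ((m : ℝ) * (2 * (d l : ℝ))) := by
    intro l m
    induction m with
    | zero => simpa using hone
    | succ k ih =>
      have h1 := hmul _ _ _ _ ih (he l)
      rw [pow_succ]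
      convert h1 using 2
      push_cast
      ring
  have hprod : ∀ S : Finset Λ,
      ∏ l ∈ S, e l ^ n l g h ∈ A (∑ l ∈ S, (n l g h : ℝ) * (2 * (d l : ℝ))) := by
    intro S
    induction S using Finset.induction_on with
    | empty => simpa using hone
    | insert l S hl ih =>
      rw [Finset.prod_insert hl, Finset.sum_insert hl]
      exact hmul _ _ _ _ (hpow l _) ih
  have h2 := hmul _ _ _ _ (hmul _ _ _ _ hr hs) (hprod Finset.univ)
  convert h2 using 2
  rw [add_assoc, add_sub_assoc]
  congr 1
  rw [Finset.mul_sum, Finset.mul_sum, Finset.mul_sum, ← Finset.sum_add_distrib,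
    ← Finset.sum_sub_distrib]
  refine Finset.sum_congr rfl fun l _ => ?_
  rw [hn]
  ring
end

section
/- Cancellation identity at the heart of Theorem 3.3 (the restriction map is a ring homomorphism from the ⌣ product to the ⋆ product): for all real numbers x and y, Int.fract(x) + Int.fract(y) − Int.fract(x+y) = ε + f, where ε := 1 if Int.fract(x) + Int.fract(y) + Int.fract(−(x+y)) = 2 and ε := 0 otherwise, and f := 1 if Int.fract(x+y) = 0 and not both Int.fract(x) = 0 and Int.fract(y) = 0, and f := 0 otherwise. -/
/-- **The cancellation identity at the heart of Theorem 3.3 of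
Goldin–Holm–Knutson** (the restriction map is a ring homomorphism from the
`⌣` product to the `⋆` product): for all reals `x`, `y`,
`fract x + fract y − fract (x+y) = ε + f`, where `ε` is the indicator that
the three logweights `fract x`, `fract y`, `fract (−(x+y))` sum to `2`
(the obstruction-bundle condition), and `f` is the indicator that
`fract (x+y) = 0` while not both `fract x = 0` and `fract y = 0`
(the normal-bundle condition). -/
theorem fract_epsilon_plus_f (x y : ℝ) :
    Int.fract x + Int.fract y - Int.fract (x + y)
      = (if Int.fract x + Int.fract y + Int.fract (-(x + y)) = 2
            then (1 : ℝ) else 0)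
        + (if Int.fract (x + y) = 0 ∧ ¬(Int.fract x = 0 ∧ Int.fract y = 0)
            then (1 : ℝ) else 0) := by
  obtain ⟨z, hz⟩ := Int.fract_add x y
  have hx0 := Int.fract_nonneg x
  have hx1 := Int.fract_lt_one x
  have hy0 := Int.fract_nonneg y
  have hy1 := Int.fract_lt_one y
  have hs0 := Int.fract_nonneg (x + y)
  have hs1 := Int.fract_lt_one (x + y)
  have hneg : (Int.fract (x + y) = 0 ∧ Int.fract (-(x + y)) = 0) ∨
      (Int.fract (x + y) ≠ 0 ∧ Int.fract (-(x + y)) = 1 - Int.fract (x + y)) := by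
    by_cases h : Int.fract (x + y) = 0
    · exact Or.inl ⟨h, Int.fract_neg_eq_zero.mpr h⟩
    · exact Or.inr ⟨h, Int.fract_neg h⟩
  have hz1 : z < 1 := by
    have h : (z : ℝ) < 1 := by linarith
    exact_mod_cast h
  have hz2 : -2 < z := by
    have h : (-2 : ℝ) < z := by linarith
    exact_mod_cast h
  generalize Int.fract (-(x + y)) = n at *
  generalize Int.fract (x + y) = s at *
  generalize Int.fract x = a at *
  generalize Int.fract y = b at *
  have hcase : z = 0 ∨ z = -1 := by omega
  rcases hcase with rfl | rfl <;> push_cast at hz <;>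
    rcases hneg with ⟨h, h'⟩ | ⟨h, h'⟩ <;> split_ifs <;> grind
end

section
/- Finite common kernel of torus characters is equivalent to rational spanning (the computation underlying Lemma 5.2): let n and N be natural numbers and λ : Fin N → (Fin n → ℤ) a family of integer weight vectors. Then the set S := { x : Fin n → AddCircle (1 : ℝ) | for every i : Fin N, ∑_j (λ i j) • (x j) = 0 } (the common kernel in the torus (ℝ/ℤ)ⁿ of the characters determined by the λ i) is finite if and only if the family of vectors (fun j => ((λ i j : ℚ))) for i : Fin N spans (Fin n → ℚ) as a ℚ-vector space. -/
/-- **The computation underlying Lemma 5.2 of Goldin–Holm–Knutson.**  Given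
integer weight vectors `lam i : Fin n → ℤ` for `i : Fin N`, the common kernel
in the torus `(ℝ/ℤ)ⁿ` of the characters `x ↦ ∑ j, (lam i j) • x j` is finite
if and only if the rationalized vectors `(fun j => (lam i j : ℚ))` span
`Fin n → ℚ` over ℚ.  (An element `g` of a torus is a finite stabilizer iff at
some fixed point the weights with logweight `a_λ(g) = 0` span the weight
lattice rationally.) -/
theorem common_kernel_finite_iff_rational_span
    (n N : ℕ) (lam : Fin N → Fin n → ℤ) :
    ({x : Fin n → AddCircle (1 : ℝ) | ∀ i : Fin N, ∑ j, lam i j • x j = 0}).Finite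
      ↔ Submodule.span ℚ
          (Set.range fun i : Fin N => fun j : Fin n => ((lam i j : ℚ))) = ⊤ := by
  constructor
  · intro hfin
    by_contra hne
    obtain ⟨f, hf0, hf⟩ := Submodule.exists_le_ker_of_lt_top _ (lt_top_iff_ne_top.mpr hne)
    have hfv : ∀ w : Fin n → ℚ, f w = ∑ j, w j * f (Pi.single j 1) := by
      intro w
      rw [LinearMap.pi_apply_eq_sum_univ f w]
      refine Finset.sum_congr rfl fun j _ => ?_
      rw [smul_eq_mul]
      congr 2
      ext l
      simp [Pi.single_apply, eq_comm]
    obtain ⟨k, hk⟩ : ∃ k, f (Pi.single k 1) ≠ 0 := by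
      by_contra! h
      apply hf0
      ext w
      simp [h]
    have hrel : ∀ i, ∑ j, (lam i j : ℚ) * f (Pi.single j 1) = 0 := by
      intro i
      have := hf (Submodule.subset_span (Set.mem_range_self i))
      rw [LinearMap.mem_ker, hfv] at this
      exact this
    have huniv : (Set.univ : Set (AddCircle (1 : ℝ))).Finite := by
      refine (hfin.image (fun x => x k)).subset ?_
      intro u _
      obtain ⟨r, rfl⟩ := QuotientAddGroup.mk_surjective u
      refine ⟨fun j => ((r / (f (Pi.single k 1) : ℚ) * (f (Pi.single j 1) : ℚ) : ℝ) :
        AddCircle (1 : ℝ)), ?_, ?_⟩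
      · intro i
        have h1 : ∑ j, lam i j • (r / ((f (Pi.single k 1) : ℚ) : ℝ) *
            ((f (Pi.single j 1) : ℚ) : ℝ)) = 0 := by
          have h2 : ((∑ j, (lam i j : ℚ) * f (Pi.single j 1) : ℚ) : ℝ) = 0 := by
            rw [hrel i]; simp
          push_cast at h2
          calc _ = r / ((f (Pi.single k 1) : ℚ) : ℝ) *
                ∑ j, (lam i j : ℝ) * ((f (Pi.single j 1) : ℚ) : ℝ) := by
                rw [Finset.mul_sum]
                refine Finset.sum_congr rfl fun j _ => ?_
                rw [zsmul_eq_mul]; ring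
            _ = 0 := by rw [h2, mul_zero]
        have h3 := congrArg (QuotientAddGroup.mk' (AddSubgroup.zmultiples (1 : ℝ))) h1
        simp only [map_sum, map_zsmul, map_zero] at h3
        exact h3
      · have : ((f (Pi.single k 1) : ℚ) : ℝ) ≠ 0 := by exact_mod_cast hk
        simp only [div_mul_cancel₀ _ this]
    have : Fact ((0 : ℝ) < 1) := ⟨one_pos⟩
    have h4 : Finite (AddCircle (1 : ℝ)) := Set.finite_univ_iff.mp huniv
    have h5 : Finite (Set.Ico (0 : ℝ) (0 + 1)) :=
      Finite.of_equiv _ (AddCircle.equivIco (1 : ℝ) 0)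
    exact (Set.Ico_infinite (by norm_num : (0 : ℝ) < 0 + 1)) (Set.toFinite _)
  · intro hspan
    have : Fact ((0 : ℝ) < 1) := ⟨one_pos⟩
    have key : ∀ k : Fin n, ∃ d : ℤ, d ≠ 0 ∧ ∀ x : Fin n → AddCircle (1 : ℝ),
        (∀ i : Fin N, ∑ j, lam i j • x j = 0) → d • x k = 0 := by
      intro k
      have hmem : (Pi.single k 1 : Fin n → ℚ) ∈ Submodule.span ℚ
          (Set.range fun i : Fin N => fun j : Fin n => ((lam i j : ℚ))) := by
        rw [hspan]; trivial
      obtain ⟨c, hc⟩ := (Submodule.mem_span_range_iff_exists_fun ℚ).mp hmem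
      obtain ⟨d, hd⟩ := IsLocalization.exist_integer_multiples_of_finite (nonZeroDivisors ℤ) c
      choose a ha using hd
      refine ⟨d, nonZeroDivisors.ne_zero d.2, fun x hx => ?_⟩
      have hcoef : ∀ j, ∑ i, a i * lam i j = if j = k then (d : ℤ) else 0 := by
        intro j
        have h1 := congrFun hc j
        simp only [Finset.sum_apply, Pi.smul_apply, smul_eq_mul, Pi.single_apply] at h1
        have h2 : ((∑ i, a i * lam i j : ℤ) : ℚ) = ((d : ℤ) : ℚ) * (if j = k then 1 else 0) := by
          rw [← h1, Finset.mul_sum]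
          push_cast
          refine Finset.sum_congr rfl fun i _ => ?_
          have h3 := ha i
          simp only [eq_intCast, zsmul_eq_mul] at h3
          rw [h3]; ring
        split_ifs at h2 ⊢ <;> simp at h2 <;> exact_mod_cast h2
      calc (d : ℤ) • x k = ∑ j, (if j = k then (d : ℤ) else 0) • x j := by
            simp [ite_smul]
        _ = ∑ j, ∑ i, a i • lam i j • x j := by
            refine Finset.sum_congr rfl fun j _ => ?_
            rw [← hcoef, Finset.sum_smul]
            simp only [mul_smul]
        _ = ∑ i, a i • ∑ j, lam i j • x j := by
            rw [Finset.sum_comm]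
            simp only [Finset.smul_sum]
        _ = 0 := by simp [hx]
    choose d hd0 hd using key
    have hfin : (Set.univ.pi fun k : Fin n =>
        {u : AddCircle (1 : ℝ) | (d k).natAbs • u = 0}).Finite :=
      Set.Finite.pi fun k => AddCircle.finite_torsion (1 : ℝ) (Int.natAbs_pos.mpr (hd0 k))
    refine hfin.subset fun x hx k _ => ?_
    have h := hd k x hx
    show (d k).natAbs • x k = 0
    rcases Int.natAbs_eq (d k) with h' | h' <;> rw [h'] at h <;> simpa using h
end

section
/- Torsion in the integral Chen-Ruan cohomology ring ℤ[u,α]/⟨u² − α², 2u³, 2uα⟩ in all high degrees: in the polynomial ring ℤ[u,α] (MvPolynomial over ℤ in two variables u and α), let I be the ideal generated by u² − α², 2·u³ and 2·u·α. Then for every natural number n ≥ 3: 2·uⁿ ∈ I and 2·u^{n−1}·α ∈ I, while uⁿ ∉ I, u^{n−1}·α ∉ I, and uⁿ − u^{n−1}·α ∉ I. (Hence in the quotient ring the images of uⁿ and u^{n−1}·α are distinct nonzero 2-torsion elements for every n ≥ 3.) -/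
/-- **Torsion in `H*_CR(ℙ²_{1,2,1}; ℤ) = ℤ[u,α]/⟨u² − α², 2u³, 2uα⟩` in all
high degrees** (Goldin–Holm–Knutson, Section 8).  In `ℤ[u,α]` with
`I = ⟨u² − α², 2u³, 2uα⟩`, for every `n ≥ 3` one has `2uⁿ ∈ I` and
`2u^{n−1}α ∈ I`, while `uⁿ ∉ I`, `u^{n−1}α ∉ I`, and `uⁿ − u^{n−1}α ∉ I`;
hence in the quotient the images of `uⁿ` and `u^{n−1}α` are distinct nonzero
2-torsion elements, so the integral Chen-Ruan cohomology of `ℙ²_{1,2,1}`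
differs even as a module from the cohomology of its crepant resolution. -/
theorem chen_ruan_P121_torsion (n : ℕ) (hn : 3 ≤ n) :
    let u : MvPolynomial (Fin 2) ℤ := MvPolynomial.X 0
    let α : MvPolynomial (Fin 2) ℤ := MvPolynomial.X 1
    let I : Ideal (MvPolynomial (Fin 2) ℤ) :=
      Ideal.span {u ^ 2 - α ^ 2, 2 * u ^ 3, 2 * u * α}
    2 * u ^ n ∈ I ∧ 2 * u ^ (n - 1) * α ∈ I ∧
      u ^ n ∉ I ∧ u ^ (n - 1) * α ∉ I ∧ u ^ n - u ^ (n - 1) * α ∉ I := by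
  intro u α I
  obtain ⟨k, rfl⟩ : ∃ k, n = k + 3 := ⟨n - 3, by omega⟩
  have e : k + 3 - 1 = k + 2 := by omega
  rw [e]
  -- evaluate in the dual numbers over `ZMod 2` at `u = 1`, `α = 1 + ε`
  let f : MvPolynomial (Fin 2) ℤ →+* DualNumber (ZMod 2) :=
    MvPolynomial.eval₂Hom (Int.castRingHom _) ![1, 1 + DualNumber.eps]
  have fu : f u = 1 := by simp [f, u]
  have fa : f α = 1 + DualNumber.eps := by simp [f, α]
  have h2 : (2 : DualNumber (ZMod 2)) = 0 := by
    have h : (2 : ZMod 2) = 0 := by decide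
    have := congrArg (algebraMap (ZMod 2) (DualNumber (ZMod 2))) h
    simpa only [map_ofNat, map_zero] using this
  have f2 : f 2 = 0 := (map_ofNat f 2).trans h2
  have hI : ∀ x ∈ I, f x = 0 := by
    have : I ≤ RingHom.ker f := by
      refine Ideal.span_le.2 ?_
      rintro x (rfl | rfl | rfl)
      · have he : (DualNumber.eps : DualNumber (ZMod 2)) * DualNumber.eps = 0 :=
          DualNumber.eps_mul_eps
        simp only [SetLike.mem_coe, RingHom.mem_ker, map_sub, map_pow, fu, fa]
        linear_combination -he - DualNumber.eps * h2
      · simp [RingHom.mem_ker, f2]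
      · simp [RingHom.mem_ker, f2]
    exact fun x hx => this hx
  refine ⟨?_, ?_, fun h => ?_, fun h => ?_, fun h => ?_⟩
  · have h : 2 * u ^ 3 ∈ I := Ideal.subset_span (by simp)
    convert I.mul_mem_left (u ^ k) h using 1
    ring
  · have h : 2 * u * α ∈ I := Ideal.subset_span (by simp)
    convert I.mul_mem_left (u ^ (k + 1)) h using 1
    ring
  · have := congrArg TrivSqZeroExt.fst (hI _ h)
    simp [fu] at this
  · have := congrArg TrivSqZeroExt.fst (hI _ h)
    simp [fu, fa] at this
  · have := congrArg TrivSqZeroExt.snd (hI _ h)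
    simp [fu, fa] at this
end
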